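/- Suppose an algebra A has Day operations d_0, ..., d_{2r} and Gumm operations p, j_1, ..., j_{n+1}. Then for all p', q ≥ 1 and all congruences α, β, γ of A, A is (z, w)-modular with z = 2^{p'} · 2^q − 1 and w = 2r^q + (2^q · 2^{p'+1} − 2^{q+2} − 2p' + 2)n: that is, α ∩ (β ∘_z (α∩γ)) ⊆ (α∩β) ∘_w (α∩γ). -/

import Mathlib

/-- Relational composition: `rcomp R S a c ↔ ∃ b, R a b ∧ S b c`. -/
def rcomp {A : Type*} (R S : A → A → Prop) : A → A → Prop := fun a c => ∃ b, R a b ∧ S b c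

/-- Converse of a relation. -/
def rconv {A : Type*} (R : A → A → Prop) : A → A → Prop := fun a b => R b a

/-- Intersection of relations. -/
def rinter {A : Type*} (R S : A → A → Prop) : A → A → Prop := fun a b => R a b ∧ S a b

/-- Inclusion of relations. -/
def rsub {A : Type*} (R S : A → A → Prop) : Prop := ∀ a b, R a b → S a b

/-- Alternating composition with `m` factors, starting with `R`:
`altn R S m = R ∘ S ∘ R ∘ ⋯` (`m` factors, `m-1` occurrences of `∘`). -/
def altn {A : Type*} : (A → A → Prop) → (A → A → Prop) → ℕ → A → A → Prop
  | _, _, 0 => Eq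
  | R, S, m + 1 => rcomp R (altn S R m)

/-- Composition `T i ∘ T (i+1) ∘ ⋯ ∘ T (i+m-1)` of `m` relations starting at index `i`. -/
def chainFrom {A : Type*} (T : ℕ → A → A → Prop) : ℕ → ℕ → A → A → Prop
  | _, 0 => Eq
  | i, m + 1 => rcomp (T i) (chainFrom T (i + 1) m)

/-- The nested expression `A_ℓ`: `nest α β γ 1 = α∩(β ∘ (α∩γ) ∘ β)`, and
`nest α β γ (ℓ+1) = α∩(β ∘ (α ∩ nest α γ β ℓ) ∘ β)` (the inner one swaps `β` and `γ`). -/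
def nest {A : Type*} : (A → A → Prop) → (A → A → Prop) → (A → A → Prop) → ℕ → A → A → Prop
  | _, _, γ, 0 => γ
  | α, β, γ, ℓ + 1 => rinter α (rcomp β (rcomp (rinter α (nest α γ β ℓ)) β))

/-- A ternary operation preserves a relation. -/
def pres3 {A : Type*} (f : A → A → A → A) (R : A → A → Prop) : Prop :=
  ∀ a₁ a₂ a₃ b₁ b₂ b₃, R a₁ b₁ → R a₂ b₂ → R a₃ b₃ → R (f a₁ a₂ a₃) (f b₁ b₂ b₃)

/-- A quaternary operation preserves a relation. -/
def pres4 {A : Type*} (f : A → A → A → A → A) (R : A → A → Prop) : Prop :=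
  ∀ a₁ a₂ a₃ a₄ b₁ b₂ b₃ b₄, R a₁ b₁ → R a₂ b₂ → R a₃ b₃ → R a₄ b₄ →
    R (f a₁ a₂ a₃ a₄) (f b₁ b₂ b₃ b₄)

/-- Day equations for quaternary operations `d 0, …, d k`. -/
def DayEqs {A : Type*} (k : ℕ) (d : ℕ → A → A → A → A → A) : Prop :=
  (∀ i, i ≤ k → ∀ x y, d i x y y x = x) ∧
  (∀ x y z w, d 0 x y z w = x) ∧
  (∀ i, i < k → i % 2 = 0 → ∀ x w, d i x x w w = d (i + 1) x x w w) ∧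
  (∀ i, i < k → i % 2 = 1 → ∀ x y w, d i x y y w = d (i + 1) x y y w) ∧
  (∀ x y z w, d k x y z w = w)

/-- Jónsson equations for ternary operations `j 0, …, j (n+1)` witnessing `n+1`-distributivity. -/
def JonssonEqs {A : Type*} (n : ℕ) (j : ℕ → A → A → A → A) : Prop :=
  (∀ i, i ≤ n + 1 → ∀ x y, j i x y x = x) ∧
  (∀ x y z, j 0 x y z = x) ∧
  (∀ i, i ≤ n → i % 2 = 1 → ∀ x z, j i x z z = j (i + 1) x z z) ∧
  (∀ i, i ≤ n → i % 2 = 0 → ∀ x z, j i x x z = j (i + 1) x x z) ∧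
  (∀ x y z, j (n + 1) x y z = z)

/-- Gumm equations for ternary operations `p, j 1, …, j (n+1)`. -/
def GummEqs {A : Type*} (n : ℕ) (p : A → A → A → A) (j : ℕ → A → A → A → A) : Prop :=
  (∀ i, 1 ≤ i → i ≤ n + 1 → ∀ x y, j i x y x = x) ∧
  (∀ x z, p x z z = x) ∧
  (∀ x z, p x x z = j 1 x x z) ∧
  (∀ i, 1 ≤ i → i ≤ n → i % 2 = 1 → ∀ x z, j i x z z = j (i + 1) x z z) ∧
  (∀ i, 1 ≤ i → i ≤ n → i % 2 = 0 → ∀ x z, j i x x z = j (i + 1) x x z) ∧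
  (∀ x y z, j (n + 1) x y z = z)

/-- Defective Gumm equations: all Gumm equations except that `j n (x,y,x) = x` is not assumed. -/
def DefGummEqs {A : Type*} (n : ℕ) (p : A → A → A → A) (j : ℕ → A → A → A → A) : Prop :=
  (∀ i, 1 ≤ i → i ≤ n + 1 → i ≠ n → ∀ x y, j i x y x = x) ∧
  (∀ x z, p x z z = x) ∧
  (∀ x z, p x x z = j 1 x x z) ∧
  (∀ i, 1 ≤ i → i ≤ n → i % 2 = 1 → ∀ x z, j i x z z = j (i + 1) x z z) ∧
  (∀ i, 1 ≤ i → i ≤ n → i % 2 = 0 → ∀ x z, j i x x z = j (i + 1) x x z) ∧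
  (∀ x y z, j (n + 1) x y z = z)

/-!
Let `δ = α ∩ γ`, and cut a chain for `β ∘_{2m+1} δ` with `m` odd into `a ∘_m b`, `b δ b'`,
`b' ∘_m z`. Folding both halves at their midpoints, where Day's equation
`d_i(x,x,w,w) = d_{i+1}(x,x,w,w)` applies, links `d_i(a,b,b',z)` to `d_{i+1}(a,b,b',z)` by a chain
for `β ∘_m δ`, to which the inclusion already known for `m` applies; the other Day equation uses
only `b δ b'`. Hence passing from `m` to `2m+1` multiplies the bound by `r`. With Gumm operations
the inclusion for `m` is needed only once, from `p(a,a,z)` to `p(a,b,b')`, and each `j_i` then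
transports the whole chain from `a` to `z`, so passing from `m` to `2m+1` adds `2mn` to the bound.
Starting from `m = 1`, take `q` Day steps and then `p' - 1` Gumm steps.
-/

section Chains

variable {A : Type*} {R S R' S' : A → A → Prop} {m : ℕ} {x y z : A}

theorem altn_one (R S : A → A → Prop) : altn R S 1 = R :=
  Relation.comp_eq

theorem altn_add (R S : A → A → Prop) (m n : ℕ) :
    altn R S (m + n) = rcomp (altn R S m) (if Even m then altn R S n else altn S R n) := by
  induction m generalizing R S with
  | zero =>
    rw [zero_add, if_pos Even.zero]
    exact Relation.eq_comp.symm
  | succ m ih =>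
    calc altn R S (m + 1 + n)
        = rcomp R (altn S R (m + n)) := by rw [Nat.add_right_comm]; rfl
      _ = rcomp R (rcomp (altn S R m) (if Even m then altn S R n else altn R S n)) := by rw [ih]
      _ = rcomp (altn R S (m + 1)) (if Even m then altn S R n else altn R S n) :=
          Relation.comp_assoc.symm
      _ = _ := by simp only [Nat.even_add_one, ite_not]

theorem altn_add_of_even (hm : Even m) (n : ℕ) :
    altn R S (m + n) = rcomp (altn R S m) (altn R S n) := by
  rw [altn_add, if_pos hm]

theorem altn_add_of_odd (hm : Odd m) (n : ℕ) :
    altn R S (m + n) = rcomp (altn R S m) (altn S R n) := by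
  rw [altn_add, if_neg (Nat.not_even_iff_odd.2 hm)]

theorem altn_succ_of_even (hm : Even m) : altn R S (m + 1) = rcomp (altn R S m) R := by
  rw [altn_add_of_even hm, altn_one]

theorem altn_succ_of_odd (hm : Odd m) : altn R S (m + 1) = rcomp (altn R S m) S := by
  rw [altn_add_of_odd hm, altn_one]

theorem altn_two_mul_add_one_of_odd (hm : Odd m) :
    altn R S (2 * m + 1) = rcomp (altn R S m) (rcomp S (altn R S m)) := by
  rw [show 2 * m + 1 = m + (m + 1) by ring, altn_add_of_odd hm]
  rfl

theorem altn_refl (hR : ∀ x, R x x) (hS : ∀ x, S x x) (m : ℕ) (x : A) : altn R S m x x := by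
  induction m generalizing R S with
  | zero => rfl
  | succ m ih => exact ⟨x, hR x, ih hS hR⟩

theorem altn_map {f : A → A} (hR : ∀ x y, R x y → R' (f x) (f y))
    (hS : ∀ x y, S x y → S' (f x) (f y)) (h : altn R S m x y) : altn R' S' m (f x) (f y) := by
  induction m generalizing R S R' S' x with
  | zero => exact congrArg f h
  | succ m ih =>
    obtain ⟨u, hxu, huy⟩ := h
    exact ⟨f u, hR x u hxu, ih hS hR huy⟩

theorem altn_reverse (hR : ∀ x y, R x y → R y x) (hS : ∀ x y, S x y → S y x)
    (h : altn R S m x y) : (Even m → altn S R m y x) ∧ (Odd m → altn R S m y x) := by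
  induction m generalizing R S x with
  | zero => exact ⟨fun _ => Eq.symm h, fun h0 => absurd h0 (by decide)⟩
  | succ m ih =>
    obtain ⟨u, hxu, huy⟩ := h
    obtain ⟨ih_even, ih_odd⟩ := ih hS hR huy
    constructor <;> intro hm
    · have hm' : Odd m := by grind
      rw [altn_succ_of_odd hm']
      exact ⟨u, ih_odd hm', hR x u hxu⟩
    · have hm' : Even m := by grind
      rw [altn_succ_of_even hm']
      exact ⟨u, ih_even hm', hR x u hxu⟩

theorem altn_merge (hS : ∀ x y z, S x y → S y z → S x z) (hm : Even m) (hm0 : 0 < m) {n : ℕ}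
    (h₁ : altn R S m x y) (h₂ : altn S R (n + 1) y z) : altn R S (m + n) x z := by
  obtain ⟨k, rfl⟩ := Nat.exists_eq_add_one.2 hm0
  have hk : Odd k := by grind
  rw [altn_succ_of_odd hk] at h₁
  obtain ⟨u, hxu, huy⟩ := h₁
  obtain ⟨v, hyv, hvz⟩ := h₂
  rw [add_assoc, add_comm 1 n, altn_add_of_odd hk]
  exact ⟨u, hxu, v, hS u y v huy hyv, hvz⟩

theorem pres3_altn {f : A → A → A → A} (hR : pres3 f R) (hS : pres3 f S) (m : ℕ) :
    pres3 f (altn R S m) := by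
  induction m generalizing R S with
  | zero => rintro _ _ _ _ _ _ rfl rfl rfl; rfl
  | succ m ih =>
    rintro _ _ _ _ _ _ ⟨u, hu, hu'⟩ ⟨v, hv, hv'⟩ ⟨w, hw, hw'⟩
    exact ⟨f u v w, hR _ _ _ _ _ _ hu hv hw, ih hS hR _ _ _ _ _ _ hu' hv' hw'⟩

theorem altn_of_pres4_of_eq_diag {f g : A → A → A → A → A} (hR : Equivalence R)
    (hS : Equivalence S) (hfR : pres4 f R) (hgR : pres4 g R) (hfS : pres4 f S) (hgS : pres4 g S)
    (hfg : ∀ x w, f x x w w = g x x w w) (hm : Odd m) {a b b' z : A}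
    (hab : altn R S m a b) (hbz : altn R S m b' z) :
    altn R S m (f a b b' z) (g a b b' z) := by
  obtain ⟨l, rfl⟩ := hm
  induction l generalizing R S a b b' z with
  | zero =>
    rw [mul_zero, zero_add, altn_one] at hab hbz ⊢
    refine hR.trans (hfR _ _ _ _ a a z z (hR.refl a) (hR.symm hab) hbz (hR.refl z)) ?_
    rw [hfg]
    exact hgR _ _ _ _ _ _ _ _ (hR.refl a) hab (hR.symm hbz) (hR.refl z)
  | succ l ih =>
    have peel : altn R S (2 * (l + 1) + 1) = rcomp R (rcomp (altn S R (2 * l + 1)) R) := by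
      rw [← altn_succ_of_odd (odd_two_mul_add_one l)]
      rfl
    rw [peel] at hab hbz ⊢
    obtain ⟨a₁, ha, b₁, hab₁, hb⟩ := hab
    obtain ⟨b₁', hb', z₁, hbz₁, hz⟩ := hbz
    exact ⟨f a₁ b₁ b₁' z₁, hfR _ _ _ _ _ _ _ _ ha (hR.symm hb) hb' (hR.symm hz),
      g a₁ b₁ b₁' z₁, ih hS hR hfS hgS hfR hgR hab₁ hbz₁,
      hgR _ _ _ _ _ _ _ _ (hR.symm ha) hb (hR.symm hb') hz⟩

end Chains

section Congruences

variable {A : Type*} {k n : ℕ} {d : ℕ → A → A → A → A → A} {p : A → A → A → A}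
  {j : ℕ → A → A → A → A} {R S : A → A → Prop}

/-- Congruences of the algebra with basic operations `d 0, …, d k`; the `d i` with `i > k` are
unconstrained. -/
structure IsDayCongruence (k : ℕ) (d : ℕ → A → A → A → A → A) (R : A → A → Prop) : Prop
    extends Equivalence R where
  pres : ∀ i, i ≤ k → pres4 (d i) R

/-- Congruences of the algebra with basic operations `p, j 1, …, j (n + 1)`; `j 0` and the `j i`
with `i > n + 1` are unconstrained. -/
structure IsGummCongruence (n : ℕ) (p : A → A → A → A) (j : ℕ → A → A → A → A)
    (R : A → A → Prop) : Prop extends Equivalence R where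
  pres_p : pres3 p R
  pres_j : ∀ i, 1 ≤ i → i ≤ n + 1 → pres3 (j i) R

/-- The instance `α ∩ (β ∘_m δ) ⊆ (α ∩ β) ∘_t δ` of `(m, t)`-modularity, where `δ` stands for the
paper's `α ∩ γ`. -/
def ModularAt (α β δ : A → A → Prop) (m t : ℕ) : Prop :=
  rsub (rinter α (altn β δ m)) (altn (rinter α β) δ t)

theorem equivalence_rinter (hR : Equivalence R) (hS : Equivalence S) :
    Equivalence (rinter R S) where
  refl x := ⟨hR.refl x, hS.refl x⟩
  symm h := ⟨hR.symm h.1, hS.symm h.2⟩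
  trans h h' := ⟨hR.trans h.1 h'.1, hS.trans h.2 h'.2⟩

theorem pres3_rinter {f : A → A → A → A} (hR : pres3 f R) (hS : pres3 f S) :
    pres3 f (rinter R S) :=
  fun _ _ _ _ _ _ h₁ h₂ h₃ =>
    ⟨hR _ _ _ _ _ _ h₁.1 h₂.1 h₃.1, hS _ _ _ _ _ _ h₁.2 h₂.2 h₃.2⟩

theorem pres4_rinter {f : A → A → A → A → A} (hR : pres4 f R) (hS : pres4 f S) :
    pres4 f (rinter R S) :=
  fun _ _ _ _ _ _ _ _ h₁ h₂ h₃ h₄ =>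
    ⟨hR _ _ _ _ _ _ _ _ h₁.1 h₂.1 h₃.1 h₄.1, hS _ _ _ _ _ _ _ _ h₁.2 h₂.2 h₃.2 h₄.2⟩

theorem IsDayCongruence.rinter (hR : IsDayCongruence k d R) (hS : IsDayCongruence k d S) :
    IsDayCongruence k d (rinter R S) where
  toEquivalence := equivalence_rinter hR.toEquivalence hS.toEquivalence
  pres i hi := pres4_rinter (hR.pres i hi) (hS.pres i hi)

theorem IsGummCongruence.rinter (hR : IsGummCongruence n p j R) (hS : IsGummCongruence n p j S) :
    IsGummCongruence n p j (rinter R S) where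
  toEquivalence := equivalence_rinter hR.toEquivalence hS.toEquivalence
  pres_p := pres3_rinter hR.pres_p hS.pres_p
  pres_j i hi hin := pres3_rinter (hR.pres_j i hi hin) (hS.pres_j i hi hin)

theorem modularAt_one_two {α β δ : A → A → Prop} (hδ : ∀ x, δ x x) : ModularAt α β δ 1 2 := by
  rintro x y ⟨hα, hβ⟩
  rw [altn_one] at hβ
  exact ⟨y, ⟨hα, hβ⟩, y, hδ y, rfl⟩

end Congruences

namespace DayEqs

variable {A : Type*} {k r i m t : ℕ} {d : ℕ → A → A → A → A → A} {α β δ : A → A → Prop}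
  {a b b' z : A}

theorem rel_apply_left (hd : DayEqs k d) (hα : IsDayCongruence k d α) (hi : i ≤ k)
    (haz : α a z) (hbb' : α b b') : α (d i a b b' z) a := by
  have h := hα.pres i hi a b b' z a b b a (hα.refl a) (hα.refl b) (hα.symm hbb') (hα.symm haz)
  rwa [hd.1 i hi] at h

theorem altn_apply_succ_of_even (hd : DayEqs k d) (hα : IsDayCongruence k d α)
    (hβ : IsDayCongruence k d β) (hδ : IsDayCongruence k d δ) (hm : Odd m)
    (H : ModularAt α β δ m t) (hi : i < k) (hi_even : i % 2 = 0) (haz : α a z) (hbb' : α b b')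
    (hab : altn β δ m a b) (hbz : altn β δ m b' z) :
    altn (rinter α β) δ t (d i a b b' z) (d (i + 1) a b b' z) := by
  have ⟨_, _, h_even, _, _⟩ := hd
  refine H _ _ ⟨hα.trans (hd.rel_apply_left hα hi.le haz hbb')
    (hα.symm (hd.rel_apply_left hα hi haz hbb')), ?_⟩
  exact altn_of_pres4_of_eq_diag hβ.toEquivalence hδ.toEquivalence (hβ.pres i hi.le)
    (hβ.pres (i + 1) hi) (hδ.pres i hi.le) (hδ.pres (i + 1) hi) (h_even i hi hi_even) hm hab hbz

theorem rel_apply_succ_of_odd (hd : DayEqs k d) (hδ : IsDayCongruence k d δ) (hi : i < k)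
    (hi_odd : i % 2 = 1) (hbb' : δ b b') : δ (d i a b b' z) (d (i + 1) a b b' z) := by
  obtain ⟨-, -, -, h_odd, -⟩ := hd
  have h := hδ.pres i hi.le a b b' z a b b z (hδ.refl a) (hδ.refl b) (hδ.symm hbb') (hδ.refl z)
  rw [h_odd i hi hi_odd] at h
  exact hδ.trans h (hδ.pres (i + 1) hi _ _ _ _ _ _ _ _ (hδ.refl a) (hδ.refl b) hbb' (hδ.refl z))

theorem altn_apply_two_mul (hd : DayEqs (2 * r) d) (hα : IsDayCongruence (2 * r) d α)
    (hβ : IsDayCongruence (2 * r) d β) (hδ : IsDayCongruence (2 * r) d δ) (hδα : rsub δ α)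
    (hm : Odd m) (ht : Even t) (ht0 : 0 < t) (H : ModularAt α β δ m t) (haz : α a z)
    (hab : altn β δ m a b) (hbb' : δ b b') (hbz : altn β δ m b' z) {u : ℕ} (hu : u ≤ r) :
    altn (rinter α β) δ (u * t) a (d (2 * u) a b b' z) := by
  induction u with
  | zero => rw [zero_mul, mul_zero, hd.2.1]; rfl
  | succ u ih =>
    have even_step := hd.altn_apply_succ_of_even hα hβ hδ hm H (i := 2 * u) (by omega) (by omega)
      haz (hδα b b' hbb') hab hbz
    have odd_step : δ (d (2 * u + 1) a b b' z) (d (2 * (u + 1)) a b b' z) :=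
      hd.rel_apply_succ_of_odd hδ (i := 2 * u + 1) (by omega) (by omega) hbb'
    rw [add_one_mul, altn_add_of_even (ht.mul_left u)]
    refine ⟨_, ih (by omega), ?_⟩
    exact altn_merge (S := δ) (n := 0) (fun _ _ _ => hδ.trans) ht ht0 even_step ⟨_, odd_step, rfl⟩

theorem modularAt_two_mul_add_one (hd : DayEqs (2 * r) d) (hα : IsDayCongruence (2 * r) d α)
    (hβ : IsDayCongruence (2 * r) d β) (hδ : IsDayCongruence (2 * r) d δ) (hδα : rsub δ α)
    (hm : Odd m) (ht : Even t) (ht0 : 0 < t) (H : ModularAt α β δ m t) :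
    ModularAt α β δ (2 * m + 1) (r * t) := by
  rintro a z ⟨haz, h⟩
  rw [altn_two_mul_add_one_of_odd hm] at h
  obtain ⟨b, hab, b', hbb', hbz⟩ := h
  have main := hd.altn_apply_two_mul hα hβ hδ hδα hm ht ht0 H haz hab hbb' hbz le_rfl
  obtain ⟨-, -, -, -, h_last⟩ := hd
  rwa [h_last] at main

theorem modularAt_two_pow (hd : DayEqs (2 * r) d) (hr : 1 ≤ r) (hα : IsDayCongruence (2 * r) d α)
    (hβ : IsDayCongruence (2 * r) d β) (hδ : IsDayCongruence (2 * r) d δ) (hδα : rsub δ α)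
    (q : ℕ) : ModularAt α β δ (2 ^ (q + 1) - 1) (2 * r ^ q) := by
  induction q with
  | zero => exact modularAt_one_two hδ.refl
  | succ q ih =>
    have hpos : 0 < 2 ^ (q + 1) := by positivity
    have hodd : Odd (2 ^ (q + 1) - 1) :=
      Nat.Even.sub_odd hpos (even_two.pow_of_ne_zero q.succ_ne_zero) odd_one
    have h := hd.modularAt_two_mul_add_one hα hβ hδ hδα hodd (even_two_mul _) (by positivity) ih
    convert h using 1
    · rw [pow_succ' 2 (q + 1)]
      omega
    · ring

end DayEqs

namespace GummEqs

variable {A : Type*} {n i m t : ℕ} {p : A → A → A → A} {j : ℕ → A → A → A → A}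
  {α β δ : A → A → Prop} {a b b' x y z : A}

theorem altn_j_one (hg : GummEqs n p j) (hα : IsGummCongruence n p j α)
    (hβ : IsGummCongruence n p j β) (hδ : IsGummCongruence n p j δ) (hδα : rsub δ α)
    (hm : Odd m) (ht : Even t) (ht0 : 0 < t) (H : ModularAt α β δ m t) (haz : α a z)
    (hab : altn β δ m a b) (hbb' : δ b b') (hbz : altn β δ m b' z) :
    altn δ (rinter α β) t a (j 1 a a z) := by
  obtain ⟨-, p_right, p_left, -⟩ := hg
  have hδp : δ a (p a b b') := by
    have h := hδ.pres_p a b b a b b' (hδ.refl a) (hδ.refl b) hbb'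
    rwa [p_right] at h
  have hαp : α a (p a a z) := by
    have h := hα.pres_p a a a a a z (hα.refl a) (hα.refl a) haz
    rwa [p_right] at h
  have hzb : altn β δ m z b' :=
    (altn_reverse (fun _ _ => hβ.symm) (fun _ _ => hδ.symm) hbz).2 hm
  have hβδ : altn β δ m (p a a z) (p a b b') :=
    pres3_altn hβ.pres_p hδ.pres_p m _ _ _ _ _ _ (altn_refl hβ.refl hδ.refl m a) hab hzb
  have hpp : altn (rinter α β) δ t (p a a z) (p a b b') :=
    H _ _ ⟨hα.trans (hα.symm hαp) (hδα _ _ hδp), hβδ⟩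
  have hpp' := (altn_reverse (fun _ _ => (hα.rinter hβ).symm) (fun _ _ => hδ.symm) hpp).1 ht
  rw [← p_left]
  obtain ⟨s, rfl⟩ := Nat.exists_eq_add_one.2 ht0
  obtain ⟨u, hu, hrest⟩ := hpp'
  exact ⟨u, hδ.trans hδp hu, hrest⟩

theorem altn_j_middle (hg : GummEqs n p j) (hα : IsGummCongruence n p j α)
    (hβ : IsGummCongruence n p j β) (hδ : IsGummCongruence n p j δ) (hi : 1 ≤ i)
    (hin : i ≤ n + 1) (haz : α a z) (hxy : altn β δ m x y) :
    altn (rinter α β) δ m (j i a x z) (j i a y z) := by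
  have hαj (v : A) : α (j i a v z) a := by
    have h := hα.pres_j i hi hin a v z a v a (hα.refl a) (hα.refl v) (hα.symm haz)
    rwa [hg.1 i hi hin] at h
  exact altn_map (f := fun v => j i a v z)
    (fun u v huv => ⟨hα.trans (hαj u) (hα.symm (hαj v)),
      hβ.pres_j i hi hin _ _ _ _ _ _ (hβ.refl a) huv (hβ.refl z)⟩)
    (fun u v huv => hδ.pres_j i hi hin _ _ _ _ _ _ (hδ.refl a) huv (hδ.refl z)) hxy

theorem altn_j (hg : GummEqs n p j) (hα : IsGummCongruence n p j α)
    (hβ : IsGummCongruence n p j β) (hδ : IsGummCongruence n p j δ) (hm : Even m)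
    (ht : Even t) (ht0 : 0 < t) (haz_α : α a z) (haz : altn β δ (m + 1) a z)
    (hstart : altn δ (rinter α β) t a (j 1 a a z)) (hin : i ≤ n) :
    altn δ (rinter α β) (t + i * m) a
      (if i % 2 = 0 then j (i + 1) a a z else j (i + 1) a z z) := by
  have hza := (altn_reverse (fun _ _ => hβ.symm) (fun _ _ => hδ.symm) haz).2 hm.add_one
  have hαβ := hα.rinter hβ
  have ⟨_, _, _, j_odd, j_even, _⟩ := hg
  induction i with
  | zero => simpa using hstart
  | succ i ih =>
    have ih := ih (by omega)
    have hlen : Even (t + i * m) := ht.add (hm.mul_left i)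
    rw [add_one_mul, ← add_assoc]
    refine altn_merge (S := rinter α β) (fun _ _ _ => hαβ.trans) hlen (by omega) ih ?_
    rcases Nat.mod_two_eq_zero_or_one i with h | h
    · rw [if_pos h, if_neg (by omega), ← j_odd (i + 1) (by omega) hin (by omega)]
      exact hg.altn_j_middle hα hβ hδ (by omega) (by omega) haz_α haz
    · rw [if_neg (by omega), if_pos (by omega), ← j_even (i + 1) (by omega) hin (by omega)]
      exact hg.altn_j_middle hα hβ hδ (by omega) (by omega) haz_α hza

theorem modularAt_two_mul_add_one (hg : GummEqs n p j) (hα : IsGummCongruence n p j α)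
    (hβ : IsGummCongruence n p j β) (hδ : IsGummCongruence n p j δ) (hδα : rsub δ α)
    (hm : Odd m) (ht : Even t) (ht0 : 0 < t) (H : ModularAt α β δ m t) :
    ModularAt α β δ (2 * m + 1) (t + n * (2 * m)) := by
  rintro z a ⟨hza_α, hza⟩
  have haz := (altn_reverse (fun _ _ => hβ.symm) (fun _ _ => hδ.symm) hza).2
    (odd_two_mul_add_one m)
  have haz' := haz
  rw [altn_two_mul_add_one_of_odd hm] at haz'
  obtain ⟨b, hab, b', hbb', hbz⟩ := haz'
  have haz_α := hα.symm hza_α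
  have hstart := hg.altn_j_one hα hβ hδ hδα hm ht ht0 H haz_α hab hbb' hbz
  have main := hg.altn_j hα hβ hδ (even_two_mul m) ht ht0 haz_α haz hstart le_rfl
  obtain ⟨-, -, -, -, -, j_last⟩ := hg
  rw [j_last, j_last, ite_self] at main
  exact (altn_reverse (fun _ _ => hδ.symm) (fun _ _ => (hα.rinter hβ).symm) main).1
    (ht.add ((even_two_mul m).mul_left n))

theorem modularAt_two_pow_mul (hg : GummEqs n p j) (hα : IsGummCongruence n p j α)
    (hβ : IsGummCongruence n p j β) (hδ : IsGummCongruence n p j δ) (hδα : rsub δ α)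
    {M : ℕ} (hM : Even M) (hM0 : 0 < M) (ht : Even t) (ht0 : 0 < t)
    (H : ModularAt α β δ (M - 1) t) (s : ℕ) :
    ModularAt α β δ (2 ^ s * M - 1) (t + 2 * (∑ i ∈ Finset.range s, (2 ^ i * M - 1)) * n) := by
  induction s with
  | zero => simpa using H
  | succ s ih =>
    have hpos : 0 < 2 ^ s * M := by positivity
    have hodd : Odd (2 ^ s * M - 1) := Nat.Even.sub_odd hpos (hM.mul_left _) odd_one
    have heven : Even (t + 2 * (∑ i ∈ Finset.range s, (2 ^ i * M - 1)) * n) :=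
      ht.add ((even_two_mul _).mul_right n)
    have h := hg.modularAt_two_mul_add_one hα hβ hδ hδα hodd heven (by omega) ih
    convert h using 1
    · rw [pow_succ', mul_assoc]
      omega
    · rw [Finset.sum_range_succ]
      ring

end GummEqs

theorem sum_range_two_pow_mul_sub_one {M : ℕ} (hM : 0 < M) (s : ℕ) :
    ∑ i ∈ Finset.range s, (2 ^ i * M - 1) + s = (2 ^ s - 1) * M := by
  calc ∑ i ∈ Finset.range s, (2 ^ i * M - 1) + s
      = ∑ i ∈ Finset.range s, (2 ^ i * M - 1 + 1) := by simp [Finset.sum_add_distrib]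
    _ = ∑ i ∈ Finset.range s, 2 ^ i * M :=
        Finset.sum_congr rfl fun i _ => Nat.sub_add_cancel (by positivity : 0 < 2 ^ i * M)
    _ = (2 ^ s - 1) * M := by rw [← Finset.sum_mul, Nat.geomSum_eq le_rfl]; simp

theorem two_mul_sum_range_two_pow_sub_one (s q : ℕ) :
    2 * ∑ i ∈ Finset.range s, (2 ^ i * 2 ^ (q + 1) - 1) =
      (2 ^ (s + 2) - 4) * (2 ^ q - 1) + (2 ^ (s + 2) - 2 * (s + 1) - 2) := by
  have hs : s < 2 ^ s := s.lt_two_pow_self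
  have hpow : 2 ^ (s + 2) = 4 * 2 ^ s := by ring
  obtain ⟨Q, hQ⟩ : ∃ Q, 2 ^ q = Q + 1 := Nat.exists_eq_add_one.2 (by positivity)
  have hsum : ∑ i ∈ Finset.range s, (2 ^ i * 2 ^ (q + 1) - 1) + s =
      2 * ((2 ^ s - 1) * Q) + 2 * (2 ^ s - 1) := by
    rw [sum_range_two_pow_mul_sub_one (by positivity), pow_succ, hQ]
    ring
  rw [show 2 ^ (s + 2) - 4 = 4 * (2 ^ s - 1) by omega, hQ, Nat.add_sub_cancel, mul_assoc]
  omega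

/-- an algebra with Day operations `d 0, …, d (2r)` and Gumm operations
`p, j 1, …, j (n+1)` is `(z, w)`-modular with `z = 2^{p'} · 2^q − 1` and
`w = 2r^q + (2^q·2^{p'+1} − 2^{q+2} − 2p' + 2)n`
(= `2r^q + ((2^{p'+1} − 4)(2^q − 1) + (2^{p'+1} − 2p' − 2))n`), for all `p', q ≥ 1`. -/
theorem stmt18 {A : Type*} (r n : ℕ) (hr : 1 ≤ r)
    (d : ℕ → A → A → A → A → A) (hday : DayEqs (2 * r) d)
    (p : A → A → A → A) (j : ℕ → A → A → A → A) (hg : GummEqs n p j)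
    (α β γ : A → A → Prop)
    (hα : Equivalence α) (hβ : Equivalence β) (hγ : Equivalence γ)
    (hdα : ∀ i, i ≤ 2 * r → pres4 (d i) α)
    (hdβ : ∀ i, i ≤ 2 * r → pres4 (d i) β)
    (hdγ : ∀ i, i ≤ 2 * r → pres4 (d i) γ)
    (hpα : pres3 p α) (hjα : ∀ i, 1 ≤ i → i ≤ n + 1 → pres3 (j i) α)
    (hpβ : pres3 p β) (hjβ : ∀ i, 1 ≤ i → i ≤ n + 1 → pres3 (j i) β)
    (hpγ : pres3 p γ) (hjγ : ∀ i, 1 ≤ i → i ≤ n + 1 → pres3 (j i) γ)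
    (p' q : ℕ) (hp' : 1 ≤ p') (hq : 1 ≤ q) :
    rsub (rinter α (altn β (rinter α γ) (2 ^ p' * 2 ^ q - 1)))
      (altn (rinter α β) (rinter α γ)
        (2 * r ^ q +
          ((2 ^ (p' + 1) - 4) * (2 ^ q - 1) + (2 ^ (p' + 1) - 2 * p' - 2)) * n)) := by
  obtain ⟨s, rfl⟩ : ∃ s, p' = s + 1 := Nat.exists_eq_add_one.2 hp'
  have hα_day : IsDayCongruence (2 * r) d α := ⟨hα, hdα⟩
  have hα_gumm : IsGummCongruence n p j α := ⟨hα, hpα, hjα⟩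
  have hδα : rsub (rinter α γ) α := fun _ _ h => h.1
  have day : ModularAt α β (rinter α γ) (2 ^ (q + 1) - 1) (2 * r ^ q) :=
    hday.modularAt_two_pow hr hα_day ⟨hβ, hdβ⟩ (hα_day.rinter ⟨hγ, hdγ⟩) hδα q
  have gumm := hg.modularAt_two_pow_mul hα_gumm ⟨hβ, hpβ, hjβ⟩ (hα_gumm.rinter ⟨hγ, hpγ, hjγ⟩) hδα
    (even_two.pow_of_ne_zero q.succ_ne_zero) (by positivity) (even_two_mul _) (by positivity) day s
  rw [two_mul_sum_range_two_pow_sub_one,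
    show 2 ^ s * 2 ^ (q + 1) = 2 ^ (s + 1) * 2 ^ q by ring] at gumm
  exact gumm
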